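/- The map clean_SK is idempotent: for every relation r over R with surrogate key SK and potential key X ⊆ R \ {SK}, clean_SK(clean_SK(r, SK, X), SK, X) = clean_SK(r, SK, X), where the equivalence classes used in the outer application are computed in the relation clean_SK(r, SK, X). -/

import Mathlib

/-- Artificially unique duplicates: `t₁ ≡ t₂` iff `sim (t₁ A) (t₂ A)` for every `A ∈ X`. -/
def AUD {R D : Type*} (sim : D → D → Prop) (X : Set R) (t₁ t₂ : R → D) : Prop :=
  ∀ A ∈ X, sim (t₁ A) (t₂ A)

/-- The equivalence class `[t(SK)] = { t'(SK) : t' ∈ r, t ≡ t' }`. -/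
def eqClass {R D : Type*} (r : Set (R → D)) (sim : D → D → Prop) (X : Set R) (SK : R)
    (t : R → D) : Set D :=
  { v | ∃ t' ∈ r, AUD sim X t t' ∧ v = t' SK }

/-- `clean_SK(r, SK, X)`: tuples agreeing with some `t' ∈ r` on `R \ {SK}` and whose
`SK`-value is the minimum (the least element) of the equivalence class `[t'(SK)]`,
the class being computed in `r` itself. -/
def cleanSK {R D : Type*} [LinearOrder D] (r : Set (R → D)) (sim : D → D → Prop)
    (X : Set R) (SK : R) : Set (R → D) :=
  { t | ∃ t' ∈ r, (∀ A, A ≠ SK → t A = t' A) ∧ IsLeast (eqClass r sim X SK t') (t SK) }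

/-!
Cleaning replaces the surrogate value of a tuple by one that an equivalent tuple of `r` attains, so
a cleaned tuple stays equivalent to the tuple it comes from and carries the least surrogate value
of its own class in `r`. Consequently the classes computed in the cleaned relation are contained in
those computed in `r`, the surrogate values of cleaned tuples remain least in them, and a relation
all of whose tuples carry the least surrogate value of their class is fixed by cleaning.
-/

section

variable {R D : Type*} {r : Set (R → D)} {sim : D → D → Prop} {X : Set R} {SK : R} {s t : R → D}

theorem equivalence_aud (hsim : Equivalence sim) (X : Set R) : Equivalence (AUD sim X) where
  refl _ _ _ := hsim.refl _
  symm h A hA := hsim.symm (h A hA)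
  trans h₁ h₂ A hA := hsim.trans (h₁ A hA) (h₂ A hA)

theorem eqClass_eq_of_aud (hsim : Equivalence sim) (hst : AUD sim X s t) :
    eqClass r sim X SK s = eqClass r sim X SK t := by
  have haud := equivalence_aud hsim X
  ext v
  constructor
  · rintro ⟨u, hu, hsu, hv⟩
    exact ⟨u, hu, haud.trans (haud.symm hst) hsu, hv⟩
  · rintro ⟨u, hu, htu, hv⟩
    exact ⟨u, hu, haud.trans hst htu, hv⟩

theorem aud_of_mem_eqClass (hsim : Equivalence sim) (hagree : ∀ A, A ≠ SK → t A = s A)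
    (hmem : t SK ∈ eqClass r sim X SK s) : AUD sim X s t := by
  intro A hA
  by_cases hASK : A = SK
  · subst hASK
    obtain ⟨u, -, hsu, htu⟩ := hmem
    exact htu ▸ hsu A hA
  · exact hagree A hASK ▸ hsim.refl (s A)

variable [LinearOrder D]

theorem isLeast_eqClass_of_mem_cleanSK (hsim : Equivalence sim) (ht : t ∈ cleanSK r sim X SK) :
    IsLeast (eqClass r sim X SK t) (t SK) := by
  obtain ⟨s, -, hagree, hleast⟩ := ht
  have hst : AUD sim X s t := aud_of_mem_eqClass hsim hagree hleast.1
  exact eqClass_eq_of_aud hsim hst ▸ hleast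

theorem eqClass_cleanSK_subset (hsim : Equivalence sim) (t : R → D) :
    eqClass (cleanSK r sim X SK) sim X SK t ⊆ eqClass r sim X SK t := by
  rintro _ ⟨s, hs, hts, rfl⟩
  rw [eqClass_eq_of_aud hsim hts]
  exact (isLeast_eqClass_of_mem_cleanSK hsim hs).1

theorem cleanSK_eq_self (hleast : ∀ t ∈ r, IsLeast (eqClass r sim X SK t) (t SK)) :
    cleanSK r sim X SK = r := by
  ext t
  constructor
  · rintro ⟨s, hs, hagree, ht⟩
    have hSK : t SK = s SK := ht.unique (hleast s hs)
    have hts : t = s := funext fun A ↦ (eq_or_ne A SK).elim (fun h ↦ h ▸ hSK) (hagree A)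
    exact hts ▸ hs
  · exact fun ht ↦ ⟨t, ht, fun _ _ ↦ rfl, hleast t ht⟩

end

theorem cleanSK_idempotent_general {R D : Type*} [LinearOrder D] (r : Set (R → D))
    (sim : D → D → Prop) (hsim : Equivalence sim) (SK : R) (X : Set R) :
    cleanSK (cleanSK r sim X SK) sim X SK = cleanSK r sim X SK := by
  refine cleanSK_eq_self fun t ht ↦ ⟨⟨t, ht, (equivalence_aud hsim X).refl t, rfl⟩, ?_⟩
  exact lowerBounds_mono_set (eqClass_cleanSK_subset hsim t)
    (isLeast_eqClass_of_mem_cleanSK hsim ht).2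

/-- `clean_SK` is idempotent:
`clean_SK(clean_SK(r, SK, X), SK, X) = clean_SK(r, SK, X)`, where the equivalence
classes used in the outer application are computed in `clean_SK(r, SK, X)`. -/
theorem cleanSK_idempotent {R D : Type*} [LinearOrder D]
    (r : Set (R → D)) (hfin : r.Finite)
    (sim : D → D → Prop) (hsim : Equivalence sim)
    (SK : R) (hSK : Set.InjOn (fun t => t SK) r)
    (X : Set R) (hX : SK ∉ X) :
    cleanSK (cleanSK r sim X SK) sim X SK = cleanSK r sim X SK :=
  cleanSK_idempotent_general r sim hsim SK X
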